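/- Let β ∈ [0,1) be a left-c.e. real number that is qS-complete among left-c.e. reals, i.e. γ ≤_qS β for every left-c.e. real γ. Then h₁(β) is also qS-complete among left-c.e. reals, i.e. γ ≤_qS h₁(β) for every left-c.e. real γ. -/

import Mathlib

open Filter Topology

/-- `a` is a computable nondecreasing sequence of rationals converging to the real `x`. -/
def CompApproxSeq (x : ℝ) (a : ℕ → ℚ) : Prop :=
  Computable a ∧ Monotone a ∧ Filter.Tendsto (fun n => (a n : ℝ)) Filter.atTop (nhds x)

/-- A real number is left-c.e. if it has a computable nondecreasing sequence of
rationals converging to it (equivalently, its left cut is c.e.). -/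
def LeftCE (x : ℝ) : Prop := ∃ a : ℕ → ℚ, CompApproxSeq x a

/-- Solovay reducibility: there are a partial computable `f : ℚ →. ℚ` and a positive
integer `d` such that for every rational `q < β`, `f q` is defined, `f q < α`, and
`α - f q < d * (β - q)`. -/
def SRed (α β : ℝ) : Prop :=
  ∃ f : ℚ →. ℚ, Partrec f ∧ ∃ d : ℕ, 0 < d ∧
    ∀ q : ℚ, (q : ℝ) < β → ∃ y ∈ f q, (y : ℝ) < α ∧ α - (y : ℝ) < (d : ℝ) * (β - (q : ℝ))

/-- Quasi Solovay reducibility: there are a partial computable `f : ℚ →. ℚ` and positive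
integers `d, l` such that for every rational `q < β`, `f q` is defined, `f q < α`, and
`(α - f q) ^ l < d * (β - q)`. -/
def QSRed (α β : ℝ) : Prop :=
  ∃ f : ℚ →. ℚ, Partrec f ∧ ∃ d l : ℕ, 0 < d ∧ 0 < l ∧
    ∀ q : ℚ, (q : ℝ) < β → ∃ y ∈ f q, (y : ℝ) < α ∧
      (α - (y : ℝ)) ^ l < (d : ℝ) * (β - (q : ℝ))

/-- The `n`-th binary digit (after the binary point, counting from `n = 0`) of the
canonical binary expansion of a real in `[0,1)` (the expansion with infinitely many 0s). -/
noncomputable def binDigit (x : ℝ) (n : ℕ) : ℕ := (⌊x * 2 ^ (n + 1)⌋).toNat % 2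

/-- `h₁ x` is the real whose binary expansion lists each bit of `x` followed by its
complement: if `x = Σ aₙ 2^{-(n+1)}` then
`h₁ x = Σ (aₙ 2^{-(2n+1)} + (1 - aₙ) 2^{-(2n+2)})`. -/
noncomputable def h₁ (x : ℝ) : ℝ :=
  ∑' n : ℕ, ((binDigit x n : ℝ) / 2 ^ (2 * n + 1) + (1 - (binDigit x n : ℝ)) / 2 ^ (2 * n + 2))

/-!
Adding the complementary digits makes `h₁` strictly increasing with the quadratic modulus
`(y - x) ^ 2 ≤ 3 * (h₁ y - h₁ x)`, and `h₁` maps dyadic rationals computably to rationals. Given a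
rational `q < h₁ β`, search for a dyadic `p < β` with `q < h₁ p`; then
`(β - p) ^ 2 ≤ 3 * (h₁ β - h₁ p) < 3 * (h₁ β - q)`, so `p` witnesses `β ≤_qS h₁ β`. The search
succeeds if `β` is not dyadic, since truncations of `β` then approach it strictly from below and
their images converge to `h₁ β`. At a dyadic `β` the map `h₁` jumps and the search may fail, but
there `β` and `h₁ β` are both rational and a translation is a reduction. Transitivity of `≤_qS`
carries completeness from `β` to `h₁ β`.
-/

/-! ### Computable search and computable rational arithmetic -/

theorem computablePred_and {α : Type*} [Primcodable α] {p q : α → Prop} (hp : ComputablePred p)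
    (hq : ComputablePred q) : ComputablePred fun a => p a ∧ q a := by
  classical
  exact ((Primrec.and.to_comp.comp hp.decide hq.decide).of_eq fun a =>
    (Bool.decide_and ..).symm).computablePred

theorem computablePred_comp {α σ : Type*} [Primcodable α] [Primcodable σ] {p : σ → Prop} {f : α → σ}
    (hp : ComputablePred p) (hf : Computable f) : ComputablePred fun a => p (f a) := by
  classical
  exact (hp.decide.comp hf).computablePred

theorem exists_partrec_uniformization {α σ : Type*} [Primcodable α] [Denumerable σ]
    {R : α → σ → Prop} (hR : ComputablePred fun x : α × σ => R x.1 x.2) :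
    ∃ f : α →. σ, Partrec f ∧ ∀ a, (∃ b, R a b) → ∃ b ∈ f a, R a b := by
  classical
  have hdec : Computable₂ fun a k => decide (R a (Denumerable.ofNat σ k)) :=
    hR.decide.comp (Computable.pair Computable.fst
      ((Computable.ofNat σ).comp Computable.snd))
  refine ⟨_, (Partrec.rfind hdec.partrec₂).map
    ((Computable.ofNat σ).comp Computable.snd).to₂, fun a ⟨b, hb⟩ => ?_⟩
  obtain ⟨k, hk, -⟩ := Nat.rfind_min' (p := fun k => decide (R a (Denumerable.ofNat σ k)))
    (m := Encodable.encode b) (by simpa using hb)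
  exact ⟨Denumerable.ofNat σ k, Part.mem_map _ hk, by simpa using Nat.rfind_spec hk⟩

theorem computable_of_graph {α σ : Type*} [Primcodable α] [Denumerable σ] {f : α → σ}
    (hf : ComputablePred fun x : α × σ => f x.1 = x.2) : Computable f := by
  obtain ⟨g, hg, hgf⟩ := exists_partrec_uniformization (R := fun a b => f a = b) hf
  refine hg.of_eq_tot fun a => ?_
  obtain ⟨b, hb, rfl⟩ := hgf a ⟨f a, rfl⟩
  exact hb

theorem computable_coe_subtype_ofNat (s : Set ℕ) [DecidablePred (· ∈ s)] [Infinite s]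
    (hs : ComputablePred (· ∈ s)) : Computable fun n => (Nat.Subtype.ofNat s n : ℕ) := by
  have hex (x : ℕ) : ∃ k, x + k + 1 ∈ s := by
    obtain ⟨y, hy, hxy⟩ := (Set.infinite_coe_iff.1 ‹Infinite s›).exists_gt x
    obtain ⟨k, rfl⟩ := Nat.exists_eq_add_of_lt hxy
    exact ⟨k, hy⟩
  have hfind : Computable fun x => Nat.find (hex x) :=
    Computable.find (computablePred_comp hs (Primrec.succ.comp Primrec.nat_add).to_comp) hex
  have hnext : Computable fun x => x + Nat.find (hex x) + 1 :=
    Computable.succ.comp (Primrec.nat_add.to_comp.comp Computable.id hfind)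
  refine (Computable.nat_rec Computable.id (Computable.const (Nat.Subtype.ofNat s 0 : ℕ))
    (hnext.comp (Computable.snd.comp Computable.snd)).to₂).of_eq fun n => ?_
  induction n with
  | zero => rfl
  | succ n ih => simp only [id_eq] at ih ⊢; rw [ih]; rfl

-- `ℚ` gets its `Primcodable` instance this way: codes are positions in the increasing enumeration
-- of the structural codes of (numerator, denominator), so even computability of `Rat.num` requires
-- inverting those positions.
theorem computable_encode_ofEncodableOfInfinite {α : Type*} [i : Encodable α] [Infinite α]
    (h : ComputablePred (· ∈ Set.range (Encodable.encode : α → ℕ))) :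
    @Computable α ℕ (@Primcodable.ofDenumerable α (Denumerable.ofEncodableOfInfinite α)) _
      i.encode := by
  let := Encodable.decidableRangeEncode α
  have : Infinite (Set.range (Encodable.encode : α → ℕ)) :=
    Infinite.of_injective _ (Equiv.ofInjective _ Encodable.encode_injective).injective
  let := Nat.Subtype.denumerable (Set.range (Encodable.encode : α → ℕ))
  let := Denumerable.ofEncodableOfInfinite α
  refine ((computable_coe_subtype_ofNat _ h).comp Computable.encode).of_eq fun a => ?_
  exact congrArg Subtype.val (Denumerable.ofNat_encode (Encodable.equivRangeEncode α a))

theorem primrec_intEquivNatSumNat : Primrec Equiv.intEquivNatSumNat :=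
  Primrec.encode_iff.1 (Primrec.encode.of_eq fun z => by cases z <;> rfl)

theorem primrec_int_toNat : Primrec Int.toNat :=
  (Primrec.sumCasesOn primrec_intEquivNatSumNat Primrec.snd.to₂
    (Primrec.const 0).to₂).of_eq fun z => by cases z <;> rfl

theorem primrec_int_toNat_neg : Primrec fun z : ℤ => (-z).toNat :=
  (Primrec.sumCasesOn primrec_intEquivNatSumNat (Primrec.const 0).to₂
    (Primrec.succ.comp Primrec.snd).to₂).of_eq fun z => by
      cases z with
      | ofNat n => exact (Int.toNat_of_nonpos (neg_nonpos.2 n.cast_nonneg)).symm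
      | negSucc n => rfl

theorem primrec_int_natAbs : Primrec Int.natAbs :=
  (Primrec.nat_add.comp primrec_int_toNat primrec_int_toNat_neg).of_eq
    Int.toNat_add_toNat_neg_eq_natAbs

theorem primrec_int_natCast : Primrec ((↑) : ℕ → ℤ) :=
  Primrec.encode_iff.1 (Primrec.nat_double.of_eq fun _ => rfl)

theorem primrec_int_negSucc : Primrec Int.negSucc :=
  Primrec.encode_iff.1 (Primrec.nat_double_succ.of_eq fun _ => rfl)

theorem primrec₂_int_natCast_sub_natCast : Primrec₂ fun m n : ℕ => (m - n : ℤ) :=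
  (Primrec.ite (Primrec.nat_le.comp Primrec.snd Primrec.fst)
    (primrec_int_natCast.comp Primrec.nat_sub)
    (primrec_int_negSucc.comp (Primrec.nat_sub.comp Primrec.snd
      (Primrec.succ.comp Primrec.fst)))).of_eq fun ⟨m, n⟩ => by
        split_ifs with h
        · exact Int.ofNat_sub h
        · simp only [Int.negSucc_eq]; omega

theorem primrec₂_int_add : Primrec₂ ((· + ·) : ℤ → ℤ → ℤ) :=
  (primrec₂_int_natCast_sub_natCast.comp
    (Primrec.nat_add.comp (primrec_int_toNat.comp Primrec.fst) (primrec_int_toNat.comp Primrec.snd))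
    (Primrec.nat_add.comp (primrec_int_toNat_neg.comp Primrec.fst)
      (primrec_int_toNat_neg.comp Primrec.snd))).of_eq fun ⟨x, y⟩ => by
        dsimp only; omega

theorem primrec₂_int_mul : Primrec₂ ((· * ·) : ℤ → ℤ → ℤ) := by
  have hpos := primrec_int_toNat
  have hneg := primrec_int_toNat_neg
  refine (primrec₂_int_natCast_sub_natCast.comp
    (Primrec.nat_add.comp
      (Primrec.nat_mul.comp (hpos.comp Primrec.fst) (hpos.comp Primrec.snd))
      (Primrec.nat_mul.comp (hneg.comp Primrec.fst) (hneg.comp Primrec.snd)))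
    (Primrec.nat_add.comp
      (Primrec.nat_mul.comp (hpos.comp Primrec.fst) (hneg.comp Primrec.snd))
      (Primrec.nat_mul.comp (hneg.comp Primrec.fst) (hpos.comp Primrec.snd)))).of_eq
        fun ⟨x, y⟩ => ?_
  have hx := Int.toNat_sub_toNat_neg x
  have hy := Int.toNat_sub_toNat_neg y
  push_cast
  linear_combination (x.toNat - (-x).toNat : ℤ) * hy + y * hx

theorem primrecRel_int_lt : PrimrecRel ((· < ·) : ℤ → ℤ → Prop) :=
  (Primrec.nat_lt.comp
    (Primrec.nat_add.comp (primrec_int_toNat.comp Primrec.fst)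
      (primrec_int_toNat_neg.comp Primrec.snd))
    (Primrec.nat_add.comp (primrec_int_toNat.comp Primrec.snd)
      (primrec_int_toNat_neg.comp Primrec.fst))).of_eq fun ⟨x, y⟩ => by dsimp only; omega

theorem primrecRel_nat_dvd : PrimrecRel ((· ∣ ·) : ℕ → ℕ → Prop) :=
  (Primrec.eq.comp (Primrec.nat_mod.comp Primrec.snd Primrec.fst) (Primrec.const 0)).of_eq
    fun _ => Nat.dvd_iff_mod_eq_zero.symm

theorem coprime_iff_forall_lt (m n : ℕ) :
    m.Coprime n ↔ ∀ d < m + n + 1, ¬(d ∣ m ∧ d ∣ n ∧ d ≠ 1) := by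
  refine ⟨fun h d _ ⟨hm, hn, hd⟩ => hd (Nat.eq_one_of_dvd_coprimes h hm hn), fun h => ?_⟩
  by_contra hmn
  refine h (m.gcd n) ?_ ⟨Nat.gcd_dvd_left m n, Nat.gcd_dvd_right m n, hmn⟩
  rcases m.eq_zero_or_pos with rfl | hm
  · simp
  · have := Nat.gcd_le_left n hm
    omega

theorem primrecRel_nat_coprime : PrimrecRel Nat.Coprime := by
  have hdvd : PrimrecRel fun (d : ℕ) (x : ℕ × ℕ) => ¬(d ∣ x.1 ∧ d ∣ x.2 ∧ d ≠ 1) :=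
    ((primrecRel_nat_dvd.comp Primrec.fst (Primrec.fst.comp Primrec.snd)).and
      ((primrecRel_nat_dvd.comp Primrec.fst (Primrec.snd.comp Primrec.snd)).and
        (Primrec.eq.comp Primrec.fst (Primrec.const 1)).not)).not
  exact (hdvd.forall_mem_list.comp (Primrec.list_range.comp (Primrec.succ.comp Primrec.nat_add))
    Primrec.id).of_eq fun x => by simpa using (coprime_iff_forall_lt x.1 x.2).symm

theorem mem_range_rat_encode (x : ℕ) : x ∈ Set.range Rat.instEncodable.encode ↔
    0 < (Denumerable.ofNat (ℤ × ℕ) x).2 ∧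
      (Denumerable.ofNat (ℤ × ℕ) x).1.natAbs.Coprime (Denumerable.ofNat (ℤ × ℕ) x).2 := by
  constructor
  · rintro ⟨q, rfl⟩
    rw [show Rat.instEncodable.encode q = Encodable.encode (q.num, q.den) from rfl,
      Denumerable.ofNat_encode]
    exact ⟨q.pos, q.reduced⟩
  · rintro ⟨hpos, hcop⟩
    exact ⟨⟨_, _, hpos.ne', hcop⟩, Denumerable.encode_ofNat (α := ℤ × ℕ) x⟩

theorem computable_rat_num_den : Computable fun q : ℚ => (q.num, q.den) := by
  have hx : Primrec (Denumerable.ofNat (ℤ × ℕ)) := Primrec.ofNat _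
  have hrange : PrimrecPred (· ∈ Set.range Rat.instEncodable.encode) :=
    ((Primrec.nat_lt.comp (Primrec.const 0) (Primrec.snd.comp hx)).and
      (primrecRel_nat_coprime.comp (primrec_int_natAbs.comp (Primrec.fst.comp hx))
        (Primrec.snd.comp hx))).of_eq fun x => (mem_range_rat_encode x).symm
  exact Computable.encode_iff.1
    (computable_encode_ofEncodableOfInfinite (i := Rat.instEncodable) hrange.computablePred)

theorem computable_rat_num : Computable Rat.num := Computable.fst.comp computable_rat_num_den

theorem computable_rat_den : Computable Rat.den := Computable.snd.comp computable_rat_num_den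

theorem computable₂_rat_intCast_div_natCast : Computable₂ fun (n : ℤ) (d : ℕ) => (n / d : ℚ) := by
  -- `n / 0 = 0`, so the graph contains `((n, 0), 0)`.
  have hzero : PrimrecPred fun x : (ℤ × ℕ) × ℤ × ℕ => x.1.2 = 0 ∧ x.2.1 = 0 :=
    (Primrec.eq.comp (Primrec.snd.comp Primrec.fst) (Primrec.const 0)).and
      (Primrec.eq.comp (Primrec.fst.comp Primrec.snd) (Primrec.const 0))
  have hcross : PrimrecPred fun x : (ℤ × ℕ) × ℤ × ℕ =>
      x.1.2 ≠ 0 ∧ x.1.1 * x.2.2 = x.2.1 * x.1.2 :=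
    (Primrec.eq.comp (Primrec.snd.comp Primrec.fst) (Primrec.const 0)).not.and
      (Primrec.eq.comp
        (primrec₂_int_mul.comp (Primrec.fst.comp Primrec.fst)
          (primrec_int_natCast.comp (Primrec.snd.comp Primrec.snd)))
        (primrec₂_int_mul.comp (Primrec.fst.comp Primrec.snd)
          (primrec_int_natCast.comp (Primrec.snd.comp Primrec.fst))))
  refine computable_of_graph ((computablePred_comp (hzero.or hcross).computablePred (Computable.pair
    Computable.fst (computable_rat_num_den.comp Computable.snd))).of_eq fun ⟨⟨n, d⟩, q⟩ => ?_)
  rcases eq_or_ne d 0 with rfl | hd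
  · simp [eq_comm]
  · simp only [hd, false_and, ne_eq, not_false_eq_true, true_and, false_or]
    rw [← Rat.mkRat_eq_div, ← Rat.mkRat_self q, Rat.mkRat_eq_iff hd q.den_nz]
    simp

theorem computable₂_rat_add : Computable₂ ((· + ·) : ℚ → ℚ → ℚ) := by
  have hmul := primrec₂_int_mul.to_comp
  have hnum₁ : Computable fun x : ℚ × ℚ => x.1.num := computable_rat_num.comp Computable.fst
  have hnum₂ : Computable fun x : ℚ × ℚ => x.2.num := computable_rat_num.comp Computable.snd
  have hden₁ : Computable fun x : ℚ × ℚ => x.1.den := computable_rat_den.comp Computable.fst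
  have hden₂ : Computable fun x : ℚ × ℚ => x.2.den := computable_rat_den.comp Computable.snd
  have hcast := primrec_int_natCast.to_comp
  refine (computable₂_rat_intCast_div_natCast.comp
    (primrec₂_int_add.to_comp.comp (hmul.comp hnum₁ (hcast.comp hden₂))
      (hmul.comp hnum₂ (hcast.comp hden₁)))
    (Primrec.nat_mul.to_comp.comp hden₁ hden₂)).of_eq fun ⟨q, r⟩ => ?_
  rw [← Rat.mkRat_eq_div]
  exact (Rat.add_def' q r).symm

theorem computablePred_rat_lt : ComputablePred fun x : ℚ × ℚ => x.1 < x.2 := by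
  have hcross {f g : ℚ × ℚ → ℚ} (hf : Computable f) (hg : Computable g) :
      Computable fun x => (f x).num * ((g x).den : ℤ) :=
    primrec₂_int_mul.to_comp.comp (computable_rat_num.comp hf)
      (primrec_int_natCast.to_comp.comp (computable_rat_den.comp hg))
  exact (computablePred_comp primrecRel_int_lt.computablePred
    ((hcross Computable.fst Computable.snd).pair (hcross Computable.snd Computable.fst))).of_eq
      fun x => (Rat.lt_iff x.1 x.2).symm

theorem primrec₂_nat_pow : Primrec₂ ((· ^ ·) : ℕ → ℕ → ℕ) :=
  Primrec₂.unpaired'.1 Nat.Primrec.pow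

/-! ### Left-c.e. reals and quasi Solovay reducibility -/

theorem LeftCE.exists_partrec_lt_and {α σ : Type*} [Primcodable α] [Denumerable σ] {x : ℝ}
    (hx : LeftCE x) {p : σ → ℚ} (hp : Computable p) {R : α → σ → Prop}
    (hR : ComputablePred fun y : α × σ => R y.1 y.2) :
    ∃ f : α →. σ, Partrec f ∧
      ∀ a, (∃ b, (p b : ℝ) < x ∧ R a b) → ∃ b ∈ f a, (p b : ℝ) < x ∧ R a b := by
  obtain ⟨u, hu, hmono, hlim⟩ := hx
  have hux (s : ℕ) : (u s : ℝ) ≤ x :=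
    Monotone.ge_of_tendsto (fun _ _ h => Rat.cast_le.2 (hmono h)) hlim s
  have hb : Computable fun y : α × σ × ℕ => y.2.1 := Computable.fst.comp Computable.snd
  have hs : Computable fun y : α × σ × ℕ => y.2.2 := Computable.snd.comp Computable.snd
  have hstage : ComputablePred fun y : α × σ × ℕ => p y.2.1 < u y.2.2 ∧ R y.1 y.2.1 :=
    computablePred_and
      (computablePred_comp computablePred_rat_lt ((hp.comp hb).pair (hu.comp hs)))
      (computablePred_comp hR (Computable.fst.pair hb))
  obtain ⟨f, hf, hfR⟩ := exists_partrec_uniformization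
    (R := fun a (y : σ × ℕ) => p y.1 < u y.2 ∧ R a y.1) hstage
  refine ⟨_, hf.map (Computable.fst.comp Computable.snd).to₂, fun a ⟨b, hbx, hab⟩ => ?_⟩
  obtain ⟨s, hbs⟩ := (hlim.eventually_const_lt hbx).exists
  obtain ⟨⟨c, t⟩, hfa, hct, hac⟩ := hfR a ⟨(b, s), Rat.cast_lt.1 hbs, hab⟩
  exact ⟨c, Part.mem_map _ hfa, (Rat.cast_lt.2 hct).trans_le (hux t), hac⟩

theorem QSRed.trans {α β γ : ℝ} (hαβ : QSRed α β) (hβγ : QSRed β γ) : QSRed α γ := by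
  obtain ⟨f, hf, d, l, hd, hl, hfβ⟩ := hαβ
  obtain ⟨g, hg, e, k, he, hk, hgγ⟩ := hβγ
  refine ⟨fun q => (g q).bind f, hg.bind (hf.comp Computable.snd).to₂, d ^ k * e, l * k,
    by positivity, by positivity, fun q hq => ?_⟩
  obtain ⟨p, hp, hpβ, hpq⟩ := hgγ q hq
  obtain ⟨y, hy, hyα, hyp⟩ := hfβ p hpβ
  refine ⟨y, Part.mem_bind hp hy, hyα, ?_⟩
  calc (α - y) ^ (l * k) = ((α - y) ^ l) ^ k := pow_mul ..
    _ ≤ (d * (β - p)) ^ k := by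
      have := sub_nonneg.2 hyα.le
      gcongr
    _ = d ^ k * (β - p) ^ k := mul_pow ..
    _ < d ^ k * (e * (γ - q)) := by gcongr
    _ = (d ^ k * e : ℕ) * (γ - q) := by push_cast; ring

theorem qsRed_ratCast_ratCast (x y : ℚ) : QSRed (x : ℝ) (y : ℝ) := by
  refine ⟨_, (computable₂_rat_add.comp Computable.id (Computable.const (x - y))).partrec,
    2, 1, two_pos, one_pos, fun q hq => ⟨_, Part.mem_some _, ?_, ?_⟩⟩ <;>
  · push_cast [id_eq]
    linarith

/-! ### Reading binary digits in base four -/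

/-- The number whose base-four digits are the binary digits of `m`. It carries the part of `h₁` that
depends on the argument, because the digit pair `b, 1 - b` is the base-four digit `1 + b`. -/
def spread (m : ℕ) : ℕ := Nat.ofDigits 4 (Nat.digits 2 m)

theorem spread_zero : spread 0 = 0 := by simp [spread]

theorem spread_eq (m : ℕ) : spread m = 4 * spread (m / 2) + m % 2 := by
  rcases m.eq_zero_or_pos with rfl | hm
  · simp [spread_zero]
  · rw [spread, Nat.digits_def' one_lt_two hm, Nat.ofDigits_cons, add_comm]
    simp [spread]

theorem spread_mul_two_pow (m j : ℕ) : spread (m * 2 ^ j) = 4 ^ j * spread m := by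
  induction j with
  | zero => simp
  | succ j ih =>
    rw [pow_succ, ← mul_assoc, spread_eq, Nat.mul_div_cancel _ two_pos, Nat.mul_mod_left, ih]
    ring

theorem primrec_spread : Primrec spread := by
  have hstep : Primrec fun l : List ℕ =>
      some (4 * l.getD (l.length / 2) 0 + l.length % 2) :=
    Primrec.option_some.comp (Primrec.nat_add.comp
      (Primrec.nat_mul.comp (Primrec.const 4)
        ((Primrec.list_getD 0).comp Primrec.id
          (Primrec.nat_div.comp Primrec.list_length (Primrec.const 2))))
      (Primrec.nat_mod.comp Primrec.list_length (Primrec.const 2)))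
  have h : Primrec₂ fun (_ : Unit) m => spread m :=
    Primrec.nat_strong_rec _ (hstep.comp Primrec.snd).to₂ fun _ m => by
      rw [spread_eq m]
      rcases m.eq_zero_or_pos with rfl | hm
      · simp [spread_zero]
      · simp [Nat.div_lt_self hm one_lt_two]
  exact h.comp (Primrec.const ()) Primrec.id

-- The summand `2 * k` strengthens `k ^ 2 ≤ 3 * (spread (m + k) - spread m)` just enough for it to
-- pass from `m / 2` and `(m + k) / 2` to `m` and `m + k`.
theorem mul_add_two_add_three_mul_spread_le (m k : ℕ) :
    k * (k + 2) + 3 * spread m ≤ 3 * spread (m + k) := by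
  induction h : m + k using Nat.strong_induction_on generalizing m k with
  | _ s ih =>
    subst h
    rcases k.eq_zero_or_pos with rfl | hk
    · simp
    have ih := ih ((m + k) / 2) (by omega) (m / 2) ((m + k) / 2 - m / 2) (by omega)
    rw [spread_eq m, spread_eq (m + k)]
    obtain ⟨j, hj⟩ : ∃ j, (m + k) / 2 = m / 2 + j := ⟨_, (Nat.add_sub_of_le (by omega)).symm⟩
    rw [hj] at ih ⊢
    rw [Nat.add_sub_cancel_left] at ih
    have hkj : k + m % 2 = 2 * j + (m + k) % 2 := by omega
    rcases Nat.mod_two_eq_zero_or_one m with hm | hm <;>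
      rcases Nat.mod_two_eq_zero_or_one (m + k) with hmk | hmk <;>
      rw [hm, hmk] at hkj ⊢
    · obtain rfl : k = 2 * j := by omega
      nlinarith
    · obtain rfl : k = 2 * j + 1 := by omega
      nlinarith
    · obtain ⟨i, rfl⟩ : ∃ i, j = i + 1 := ⟨j - 1, by omega⟩
      obtain rfl : k = 2 * i + 1 := by omega
      nlinarith
    · obtain rfl : k = 2 * j := by omega
      nlinarith

/-! ### The map `h₁` -/

/-- The value of `h₁` at the dyadic rational `m / 2 ^ n` when `m < 2 ^ n`, written in base four:
`1 / 3` collects the contribution `1` to every digit `1 + b`. -/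
def h₁Dyadic (m n : ℕ) : ℚ := 1 / 3 + spread m / 4 ^ n

theorem sq_sub_le_three_mul_spread_sub {m m' : ℕ} (h : m ≤ m') :
    ((m' : ℝ) - m) ^ 2 ≤ 3 * (spread m' - spread m) := by
  obtain ⟨k, rfl⟩ := Nat.exists_eq_add_of_le h
  have hk : (k * (k + 2) + 3 * spread m : ℝ) ≤ 3 * spread (m + k) := by
    exact_mod_cast mul_add_two_add_three_mul_spread_le m k
  push_cast
  nlinarith

theorem sq_sub_le_h₁Dyadic_sub {m m' : ℕ} (h : m ≤ m') (n : ℕ) :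
    ((m' : ℝ) / 2 ^ n - m / 2 ^ n) ^ 2 ≤ 3 * (h₁Dyadic m' n - h₁Dyadic m n) := by
  have hpow : (4 : ℝ) ^ n = (2 ^ n) ^ 2 := by rw [← pow_mul, mul_comm, pow_mul]; norm_num
  have h3 := sq_sub_le_three_mul_spread_sub h
  simp only [h₁Dyadic]
  push_cast
  rw [← sub_div, div_pow, ← hpow, add_sub_add_left_eq_sub, ← sub_div, mul_div_assoc']
  gcongr

theorem h₁Dyadic_mul_two_pow (m n j : ℕ) : h₁Dyadic (m * 2 ^ j) (n + j) = h₁Dyadic m n := by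
  rw [h₁Dyadic, h₁Dyadic, spread_mul_two_pow, pow_add]
  push_cast
  field_simp

theorem spread_floor_mul_two_pow_succ (x : ℝ) (n : ℕ) :
    spread ⌊x * 2 ^ (n + 1)⌋₊ = 4 * spread ⌊x * 2 ^ n⌋₊ + binDigit x n := by
  have hhalf : ⌊x * 2 ^ (n + 1)⌋₊ / 2 = ⌊x * 2 ^ n⌋₊ := by
    rw [← Nat.floor_div_natCast, pow_succ]
    congr 1
    push_cast
    ring
  rw [spread_eq, hhalf, binDigit, Int.floor_toNat]

theorem h₁_eq_tsum (x : ℝ) : h₁ x = ∑' n, (1 + binDigit x n : ℝ) / 4 ^ (n + 1) := by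
  refine tsum_congr fun n => ?_
  have hpow : (2 : ℝ) ^ (2 * n) = 4 ^ n := by rw [pow_mul]; norm_num
  simp only [pow_add, hpow]
  field_simp
  ring

theorem sum_range_one_add_binDigit_div {x : ℝ} (hx : x < 1) (n : ℕ) :
    ∑ i ∈ Finset.range n, (1 + binDigit x i : ℝ) / 4 ^ (i + 1) =
      h₁Dyadic ⌊x * 2 ^ n⌋₊ n - 1 / 3 / 4 ^ n := by
  induction n with
  | zero => simp [h₁Dyadic, Nat.floor_eq_zero.2 hx, spread_zero]
  | succ n ih =>
    rw [Finset.sum_range_succ, ih]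
    simp only [h₁Dyadic, spread_floor_mul_two_pow_succ]
    push_cast
    field_simp
    ring

theorem summable_one_add_binDigit_div (x : ℝ) :
    Summable fun n => (1 + binDigit x n : ℝ) / 4 ^ (n + 1) := by
  have hgeom : Summable fun n : ℕ => (1 / 4 : ℝ) ^ n :=
    summable_geometric_of_lt_one (by norm_num) (by norm_num)
  refine hgeom.of_nonneg_of_le (fun n => by positivity) fun n => ?_
  have hdigit : (binDigit x n : ℝ) ≤ 1 := by
    exact_mod_cast Nat.le_of_lt_succ (Nat.mod_lt _ two_pos)
  rw [div_pow, one_pow, pow_succ, mul_comm, ← div_div]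
  gcongr
  linarith

theorem tendsto_h₁Dyadic_floor {x : ℝ} (hx : x < 1) :
    Tendsto (fun n => (h₁Dyadic ⌊x * 2 ^ n⌋₊ n : ℝ)) atTop (𝓝 (h₁ x)) := by
  have hpow : Tendsto (fun n : ℕ => (1 / 3 / 4 ^ n : ℝ)) atTop (𝓝 0) :=
    tendsto_const_nhds.div_atTop (tendsto_pow_atTop_atTop_of_one_lt (by norm_num))
  rw [h₁_eq_tsum]
  simpa only [sum_range_one_add_binDigit_div hx, sub_add_cancel, add_zero] using
    (summable_one_add_binDigit_div x).hasSum.tendsto_sum_nat.add hpow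

theorem natCast_div_two_pow_lt_one_iff {m n : ℕ} : (m / 2 ^ n : ℝ) < 1 ↔ m < 2 ^ n := by
  rw [div_lt_one (by positivity)]
  norm_cast

theorem h₁_natCast_div_two_pow {m n : ℕ} (hm : m < 2 ^ n) : h₁ (m / 2 ^ n) = h₁Dyadic m n := by
  have hx : (m / 2 ^ n : ℝ) < 1 := natCast_div_two_pow_lt_one_iff.2 hm
  refine tendsto_nhds_unique (tendsto_h₁Dyadic_floor hx)
    (tendsto_const_nhds.congr' (eventually_atTop.2 ⟨n, fun k hk => ?_⟩))
  obtain ⟨j, rfl⟩ := Nat.exists_eq_add_of_le hk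
  have hfloor : (m / 2 ^ n * 2 ^ (n + j) : ℝ) = (m * 2 ^ j : ℕ) := by
    push_cast
    rw [pow_add]
    field_simp
  simp only [hfloor, Nat.floor_natCast, h₁Dyadic_mul_two_pow]

theorem tendsto_floor_mul_two_pow_div {x : ℝ} (hx : 0 ≤ x) :
    Tendsto (fun n : ℕ => (⌊x * 2 ^ n⌋₊ / 2 ^ n : ℝ)) atTop (𝓝 x) :=
  (tendsto_nat_floor_mul_div_atTop hx).comp (tendsto_pow_atTop_atTop_of_one_lt one_lt_two)

theorem sq_sub_le_h₁_sub {x y : ℝ} (hx : 0 ≤ x) (hxy : x ≤ y) (hy : y < 1) :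
    (y - x) ^ 2 ≤ 3 * (h₁ y - h₁ x) :=
  le_of_tendsto_of_tendsto'
    (((tendsto_floor_mul_two_pow_div (hx.trans hxy)).sub (tendsto_floor_mul_two_pow_div hx)).pow 2)
    (((tendsto_h₁Dyadic_floor hy).sub (tendsto_h₁Dyadic_floor (hxy.trans_lt hy))).const_mul 3)
    fun n => sq_sub_le_h₁Dyadic_sub (Nat.floor_mono (by gcongr)) n

theorem exists_natCast_div_two_pow_lt_and_lt_h₁Dyadic {x : ℝ} (h0 : 0 ≤ x) (h1 : x < 1)
    (hx : ∀ m n : ℕ, x ≠ m / 2 ^ n) {q : ℝ} (hq : q < h₁ x) :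
    ∃ m n : ℕ, (m / 2 ^ n : ℝ) < x ∧ q < h₁Dyadic m n := by
  obtain ⟨n, hn⟩ := ((tendsto_h₁Dyadic_floor h1).eventually_const_lt hq).exists
  have hle : (⌊x * 2 ^ n⌋₊ / 2 ^ n : ℝ) ≤ x :=
    (div_le_iff₀ (by positivity)).2 (Nat.floor_le (by positivity))
  exact ⟨_, n, hle.lt_of_ne (hx _ n).symm, hn⟩

theorem computable₂_rat_natCast_div_two_pow : Computable₂ fun m n : ℕ => (m / 2 ^ n : ℚ) :=
  (computable₂_rat_intCast_div_natCast.comp (primrec_int_natCast.to_comp.comp Computable.fst)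
    (primrec₂_nat_pow.to_comp.comp (Computable.const 2) Computable.snd)).of_eq fun x => by
      push_cast; rfl

theorem computable₂_h₁Dyadic : Computable₂ h₁Dyadic := by
  have hpow : Primrec fun x : ℕ × ℕ => 4 ^ x.2 :=
    primrec₂_nat_pow.comp (Primrec.const 4) Primrec.snd
  have hnum : Primrec fun x : ℕ × ℕ => 4 ^ x.2 + 3 * spread x.1 :=
    Primrec.nat_add.comp hpow
      (Primrec.nat_mul.comp (Primrec.const 3) (primrec_spread.comp Primrec.fst))
  have hden : Primrec fun x : ℕ × ℕ => 3 * 4 ^ x.2 := Primrec.nat_mul.comp (Primrec.const 3) hpow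
  refine (computable₂_rat_intCast_div_natCast.comp (primrec_int_natCast.comp hnum).to_comp
    hden.to_comp).of_eq fun ⟨m, n⟩ => ?_
  rw [h₁Dyadic]
  push_cast
  field_simp

theorem qsRed_h₁_of_ne_natCast_div_two_pow {β : ℝ} (h0 : 0 ≤ β) (h1 : β < 1) (hβ : LeftCE β)
    (hne : ∀ m n : ℕ, β ≠ m / 2 ^ n) : QSRed β (h₁ β) := by
  have hR : ComputablePred fun x : ℚ × ℕ × ℕ => x.1 < h₁Dyadic x.2.1 x.2.2 :=
    computablePred_comp computablePred_rat_lt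
      (Computable.fst.pair (Computable.comp computable₂_h₁Dyadic Computable.snd))
  have hdyadic : Computable fun x : ℕ × ℕ => (x.1 / 2 ^ x.2 : ℚ) :=
    computable₂_rat_natCast_div_two_pow
  obtain ⟨f, hf, hfR⟩ := hβ.exists_partrec_lt_and hdyadic
    (R := fun q x => q < h₁Dyadic x.1 x.2) hR
  refine ⟨_, hf.map (hdyadic.comp Computable.snd).to₂, 3, 2, three_pos, two_pos, fun q hq => ?_⟩
  obtain ⟨⟨m, n⟩, hfq, hmβ, hqm⟩ := hfR q <| by
    obtain ⟨m, n, hmβ, hqm⟩ := exists_natCast_div_two_pow_lt_and_lt_h₁Dyadic h0 h1 hne hq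
    exact ⟨(m, n), by push_cast; exact hmβ, Rat.cast_lt.1 hqm⟩
  push_cast at hmβ
  have hm : m < 2 ^ n := natCast_div_two_pow_lt_one_iff.1 (hmβ.trans h1)
  have hqp : (q : ℝ) < h₁ (m / 2 ^ n) := by
    rw [h₁_natCast_div_two_pow hm]
    exact Rat.cast_lt.2 hqm
  refine ⟨_, Part.mem_map _ hfq, by push_cast; exact hmβ, ?_⟩
  push_cast
  calc (β - m / 2 ^ n) ^ 2 ≤ 3 * (h₁ β - h₁ (m / 2 ^ n)) :=
        sq_sub_le_h₁_sub (by positivity) hmβ.le h1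
    _ < 3 * (h₁ β - q) := by gcongr

theorem qsRed_h₁ {β : ℝ} (h0 : 0 ≤ β) (h1 : β < 1) (hβ : LeftCE β) : QSRed β (h₁ β) := by
  by_cases hdyadic : ∃ m n : ℕ, β = m / 2 ^ n
  · obtain ⟨m, n, rfl⟩ := hdyadic
    rw [h₁_natCast_div_two_pow (natCast_div_two_pow_lt_one_iff.1 h1)]
    have hred := qsRed_ratCast_ratCast (m / 2 ^ n) (h₁Dyadic m n)
    push_cast at hred
    exact hred
  · push Not at hdyadic
    exact qsRed_h₁_of_ne_natCast_div_two_pow h0 h1 hβ hdyadic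

/-- If `β ∈ [0,1)` is a left-c.e. real that is qS-complete among left-c.e. reals,
then `h₁ β` is also qS-complete among left-c.e. reals. -/
theorem stmt11 (β : ℝ) (h0 : 0 ≤ β) (h1 : β < 1) (hβ : LeftCE β)
    (hcomp : ∀ γ : ℝ, LeftCE γ → QSRed γ β) :
    ∀ γ : ℝ, LeftCE γ → QSRed γ (h₁ β) :=
  fun γ hγ => (hcomp γ hγ).trans (qsRed_h₁ h0 h1 hβ)
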